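/- arXiv:1906.02612 — 2 statements merged into one kernel-verified Lean document; each statement's English description precedes it below -/
import Mathlib

section
/- There exists A₀ ∈ (0,1) such that for every A ∈ [0,1), the restriction of the Crapper wave profile z_A to the interval [−π, π) is injective if and only if A < A₀. In other words, there is a critical parameter value A₀ (numerically A₀ ≈ 0.45467) below which the Crapper curve has no self-intersections and at or above which it does. -/
open Complex Real

/-- The Crapper wave profile `z_A(α) = α + 4i/(1+Ae^{−iα}) − 4i`. -/
noncomputable def crapperZ (A : ℝ) (α : ℝ) : ℂ :=
  (α : ℂ) + 4 * Complex.I / (1 + (A : ℂ) * Complex.exp (-Complex.I * (α : ℂ)))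
    - 4 * Complex.I

/-! The height of the profile at `α` is an injective function of `cos α`, so on one period only the
mirror points `α` and `-α` can coincide, and by symmetry they do so exactly on the axis `Re z = 0`.
For `α ≠ 0` the equation `Re z_A(α) = 0` reads `A + A⁻¹ = 4 sinc α - 2 cos α`. The right-hand side
is `2` at both ends of `[0, π]` and has a maximum `M > 2`, so for `A > 0`, `A ≠ 1` a crossing exists
exactly when `A + A⁻¹ ≤ M`, that is, when `A` lies between the roots `A₀ < 1 < A₀⁻¹` of
`X² - M X + 1`. -/

/-- The squared modulus `|1 + A e^{-iα}|²` of the denominator of the profile, in real form. -/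
noncomputable def crapperDenom (A α : ℝ) : ℝ :=
  1 + A ^ 2 + 2 * A * Real.cos α

/-- The value of `A + A⁻¹` for which the points of the profile with parameters `α` and `-α`
coincide. Using `sinc` extends it continuously to `α = 0`. -/
noncomputable def crossingValue (α : ℝ) : ℝ :=
  4 * Real.sinc α - 2 * Real.cos α

/-- The largest value of `A + A⁻¹` for which the profile crosses itself within a period. -/
noncomputable def criticalValue : ℝ :=
  sSup (crossingValue '' Set.Icc 0 Real.pi)

section Profile

variable {A α β : ℝ}

lemma one_add_mul_exp_neg_I_mul (A α : ℝ) :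
    1 + (A : ℂ) * Complex.exp (-Complex.I * α) =
      ⟨1 + A * Real.cos α, -(A * Real.sin α)⟩ := by
  apply Complex.ext <;> simp [Complex.exp_re, Complex.exp_im]

lemma normSq_one_add_mul_exp (A α : ℝ) :
    Complex.normSq (1 + (A : ℂ) * Complex.exp (-Complex.I * α)) = crapperDenom A α := by
  rw [one_add_mul_exp_neg_I_mul, Complex.normSq_mk, crapperDenom]
  linear_combination A ^ 2 * Real.sin_sq_add_cos_sq α

lemma crapperDenom_nonneg (A α : ℝ) : 0 ≤ crapperDenom A α :=
  normSq_one_add_mul_exp A α ▸ Complex.normSq_nonneg _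

lemma crapperDenom_pos (hA : |A| ≠ 1) (α : ℝ) : 0 < crapperDenom A α := by
  rw [← normSq_one_add_mul_exp, Complex.normSq_pos]
  intro hzero
  have hnorm := congrArg norm (eq_neg_of_add_eq_zero_right hzero)
  exact hA (by simpa [Complex.norm_exp] using hnorm)

lemma crapperZ_re (A α : ℝ) :
    (crapperZ A α).re = α - 4 * A * Real.sin α / crapperDenom A α := by
  rw [crapperZ, div_eq_mul_inv, ← normSq_one_add_mul_exp, one_add_mul_exp_neg_I_mul]
  simp only [sub_re, add_re, ofReal_re, mul_re, re_ofNat, I_re, mul_zero, im_ofNat, I_im, mul_one,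
    sub_self, inv_re, normSq_mk, mul_neg, neg_mul, neg_neg, zero_mul, mul_im, add_zero, inv_im,
    zero_sub, sub_zero]
  ring

lemma crapperZ_im (A α : ℝ) :
    (crapperZ A α).im = 4 * (1 + A * Real.cos α) / crapperDenom A α - 4 := by
  rw [crapperZ, div_eq_mul_inv, ← normSq_one_add_mul_exp, one_add_mul_exp_neg_I_mul]
  simp only [sub_im, add_im, ofReal_im, mul_im, mul_re, re_ofNat, I_re, mul_zero, im_ofNat, I_im,
    mul_one, sub_self, inv_im, neg_neg, normSq_mk, mul_neg, neg_mul, zero_mul, add_zero, inv_re,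
    zero_add, sub_left_inj]
  ring

lemma crapperDenom_neg (A α : ℝ) : crapperDenom A (-α) = crapperDenom A α := by
  rw [crapperDenom, Real.cos_neg, crapperDenom]

lemma crapperZ_re_neg (A α : ℝ) : (crapperZ A (-α)).re = -(crapperZ A α).re := by
  rw [crapperZ_re, crapperZ_re, crapperDenom_neg, Real.sin_neg]
  ring

lemma crapperZ_im_neg (A α : ℝ) : (crapperZ A (-α)).im = (crapperZ A α).im := by
  rw [crapperZ_im, crapperZ_im, crapperDenom_neg, Real.cos_neg]

lemma crapperZ_neg_eq_iff : crapperZ A (-α) = crapperZ A α ↔ (crapperZ A α).re = 0 := by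
  rw [Complex.ext_iff, crapperZ_re_neg, crapperZ_im_neg, and_iff_left rfl, neg_eq_self]

lemma crapperZ_im_eq_iff (hA₀ : A ≠ 0) (hA : |A| ≠ 1) :
    (crapperZ A α).im = (crapperZ A β).im ↔ Real.cos α = Real.cos β := by
  have hA_sq : 1 - A ^ 2 ≠ 0 := by
    rwa [sub_ne_zero, ne_comm, ← sq_abs, Ne, pow_eq_one_iff_of_nonneg (abs_nonneg A) two_ne_zero]
  have hDα := (crapperDenom_pos hA α).ne'
  have hDβ := (crapperDenom_pos hA β).ne'
  rw [crapperZ_im, crapperZ_im, sub_left_inj, div_eq_div_iff hDα hDβ, ← sub_eq_zero,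
    ← sub_eq_zero (a := Real.cos α)]
  have hfactor : 4 * (1 + A * Real.cos α) * crapperDenom A β
      - 4 * (1 + A * Real.cos β) * crapperDenom A α
      = -4 * A * (1 - A ^ 2) * (Real.cos α - Real.cos β) := by
    simp only [crapperDenom]
    ring
  rw [hfactor]
  simp [hA₀, hA_sq]

lemma eq_or_eq_neg_of_cos_eq (hα : |α| ≤ Real.pi) (hβ : |β| ≤ Real.pi)
    (h : Real.cos α = Real.cos β) : α = β ∨ α = -β := by
  rw [← Real.cos_abs α, ← Real.cos_abs β] at h
  exact abs_eq_abs.1 (Real.injOn_cos ⟨abs_nonneg α, hα⟩ ⟨abs_nonneg β, hβ⟩ h)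

lemma eq_or_eq_neg_of_crapperZ_eq (hA : |A| ≠ 1) (hα : |α| ≤ Real.pi) (hβ : |β| ≤ Real.pi)
    (h : crapperZ A α = crapperZ A β) : α = β ∨ α = -β := by
  rcases eq_or_ne A 0 with rfl | hA₀
  · left
    simpa [crapperZ_re] using congrArg Complex.re h
  · exact eq_or_eq_neg_of_cos_eq hα hβ
      ((crapperZ_im_eq_iff hA₀ hA).1 (congrArg Complex.im h))

lemma injOn_crapperZ_iff_re_ne_zero (hA : |A| ≠ 1) :
    Set.InjOn (crapperZ A) (Set.Ico (-Real.pi) Real.pi) ↔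
      ∀ α ∈ Set.Ioo 0 Real.pi, (crapperZ A α).re ≠ 0 := by
  constructor
  · rintro hinj α ⟨hα₀, hαπ⟩ hre
    have hneg : -α = α := hinj ⟨by linarith, by linarith⟩ ⟨by linarith, hαπ⟩
      (crapperZ_neg_eq_iff.2 hre)
    linarith
  · intro hre α hα β hβ h
    have hβπ : |β| ≤ Real.pi := abs_le.2 ⟨hβ.1, hβ.2.le⟩
    rcases eq_or_eq_neg_of_crapperZ_eq hA (abs_le.2 ⟨hα.1, hα.2.le⟩) hβπ h with hαβ | rfl
    · exact hαβ
    have hβ_re := crapperZ_neg_eq_iff.1 h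
    rcases lt_trichotomy β 0 with hneg | rfl | hpos
    · refine absurd ?_ (hre (-β) ⟨neg_pos.2 hneg, hα.2⟩)
      rw [crapperZ_re_neg, hβ_re, neg_zero]
    · exact neg_zero
    · exact absurd hβ_re (hre β ⟨hpos, hβ.2⟩)

lemma crapperZ_re_eq_zero_iff (hA : |A| ≠ 1) (hα : α ≠ 0) :
    (crapperZ A α).re = 0 ↔ A * crossingValue α = 1 + A ^ 2 := by
  rw [crapperZ_re, sub_eq_zero, eq_div_iff (crapperDenom_pos hA α).ne', crossingValue,
    Real.sinc_of_ne_zero hα, crapperDenom]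
  field_simp
  constructor <;> intro h <;> linear_combination -h

lemma crapperZ_re_pos (hA : A ≤ 0) (hα : α ∈ Set.Ioo 0 Real.pi) : 0 < (crapperZ A α).re := by
  have hsin := Real.sin_pos_of_mem_Ioo hα
  have hquot : 4 * A * Real.sin α / crapperDenom A α ≤ 0 :=
    div_nonpos_of_nonpos_of_nonneg (by nlinarith) (crapperDenom_nonneg A α)
  rw [crapperZ_re]
  linarith [hα.1]

end Profile

section CrossingValue

lemma continuous_crossingValue : Continuous crossingValue :=
  (continuous_const.mul Real.continuous_sinc).sub (continuous_const.mul Real.continuous_cos)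

lemma crossingValue_zero : crossingValue 0 = 2 := by
  norm_num [crossingValue]

lemma crossingValue_pi : crossingValue Real.pi = 2 := by
  simp [crossingValue, Real.sinc_of_ne_zero Real.pi_ne_zero]

lemma crossingValue_pi_div_two : crossingValue (Real.pi / 2) = 8 / Real.pi := by
  rw [crossingValue, Real.sinc_of_ne_zero (by positivity), Real.sin_pi_div_two,
    Real.cos_pi_div_two]
  field_simp
  norm_num

lemma crossingValue_image_Icc :
    crossingValue '' Set.Icc 0 Real.pi =
      Set.Icc (sInf (crossingValue '' Set.Icc 0 Real.pi)) criticalValue :=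
  continuous_crossingValue.continuousOn.image_Icc Real.pi_pos.le

lemma crossingValue_le_criticalValue {α : ℝ} (hα : α ∈ Set.Icc 0 Real.pi) :
    crossingValue α ≤ criticalValue :=
  (crossingValue_image_Icc.subset ⟨α, hα, rfl⟩).2

lemma two_lt_criticalValue : 2 < criticalValue :=
  calc
    2 < 8 / Real.pi := by
      rw [lt_div_iff₀ Real.pi_pos]
      linarith [Real.pi_lt_four]
    _ = crossingValue (Real.pi / 2) := crossingValue_pi_div_two.symm
    _ ≤ criticalValue :=
      crossingValue_le_criticalValue ⟨by positivity, half_le_self Real.pi_pos.le⟩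

lemma exists_crossingValue_eq {k : ℝ} (hk : 2 < k) (hk' : k ≤ criticalValue) :
    ∃ α ∈ Set.Ioo 0 Real.pi, crossingValue α = k := by
  have hinf : sInf (crossingValue '' Set.Icc 0 Real.pi) ≤ 2 :=
    (crossingValue_image_Icc.subset
      ⟨0, Set.left_mem_Icc.2 Real.pi_pos.le, crossingValue_zero⟩).1
  obtain ⟨α, hα, rfl⟩ := crossingValue_image_Icc.superset ⟨hinf.trans hk.le, hk'⟩
  refine ⟨α, ⟨hα.1.lt_of_ne ?_, hα.2.lt_of_ne ?_⟩, rfl⟩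
  · rintro rfl
    exact hk.ne' crossingValue_zero
  · rintro rfl
    exact hk.ne' crossingValue_pi

end CrossingValue

lemma injOn_crapperZ_iff_mul_criticalValue_lt {A : ℝ} (hA : |A| ≠ 1) :
    Set.InjOn (crapperZ A) (Set.Ico (-Real.pi) Real.pi) ↔ A * criticalValue < 1 + A ^ 2 := by
  rw [injOn_crapperZ_iff_re_ne_zero hA]
  constructor
  · intro hre
    by_contra! hle
    have hA_pos : 0 < A := pos_of_mul_pos_left (lt_of_lt_of_le (by positivity) hle)
      (by linarith [two_lt_criticalValue])
    have htwo_lt : 2 < (1 + A ^ 2) / A := by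
      have hne : A - 1 ≠ 0 := fun h ↦ hA (by rw [sub_eq_zero.1 h, abs_one])
      rw [lt_div_iff₀ hA_pos]
      linarith [sq_pos_of_ne_zero hne, sub_sq A 1]
    obtain ⟨α, hα, hcross⟩ := exists_crossingValue_eq htwo_lt ((div_le_iff₀' hA_pos).2 hle)
    exact hre α hα ((crapperZ_re_eq_zero_iff hA hα.1.ne').2
      (by rw [hcross, mul_div_cancel₀ _ hA_pos.ne']))
  · intro hlt α hα
    rcases le_total A 0 with hA_nonpos | hA_nonneg
    · exact (crapperZ_re_pos hA_nonpos hα).ne'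
    · rw [Ne, crapperZ_re_eq_zero_iff hA hα.1.ne']
      exact ((mul_le_mul_of_nonneg_left
        (crossingValue_le_criticalValue (Set.Ioo_subset_Icc_self hα)) hA_nonneg).trans_lt hlt).ne

lemma exists_add_inv_eq {M : ℝ} (hM : 2 < M) : ∃ r ∈ Set.Ioo (0 : ℝ) 1, r + r⁻¹ = M := by
  have hsq : √(M ^ 2 - 4) ^ 2 = M ^ 2 - 4 := Real.sq_sqrt (by nlinarith)
  have hlower : M - 2 < √(M ^ 2 - 4) := Real.lt_sqrt_of_sq_lt (by nlinarith)
  have hupper : √(M ^ 2 - 4) < M := (Real.sqrt_lt' (by linarith)).2 (by linarith)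
  refine ⟨(M - √(M ^ 2 - 4)) / 2, ⟨by linarith, by linarith⟩, ?_⟩
  have hinv : ((M - √(M ^ 2 - 4)) / 2)⁻¹ = (M + √(M ^ 2 - 4)) / 2 :=
    inv_eq_of_mul_eq_one_right (by linear_combination (-1 / 4) * hsq)
  rw [hinv]
  ring

lemma mul_add_inv_lt_one_add_sq_iff {r x : ℝ} (hr : r ∈ Set.Ioo 0 1) :
    x * (r + r⁻¹) < 1 + x ^ 2 ↔ x < r ∨ r⁻¹ < x := by
  have hr_lt : r < r⁻¹ := hr.2.trans ((one_lt_inv₀ hr.1).2 hr.2)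
  have hfactor : 1 + x ^ 2 - x * (r + r⁻¹) = (x - r) * (x - r⁻¹) := by
    linear_combination -mul_inv_cancel₀ hr.1.ne'
  rw [← sub_pos, hfactor, mul_pos_iff, sub_pos, sub_pos, sub_neg, sub_neg,
    and_iff_right_of_imp hr_lt.trans, and_iff_left_of_imp hr_lt.trans', or_comm]

theorem crapper_critical_parameter_general :
    ∃ A₀ ∈ Set.Ioo (0 : ℝ) 1, ∀ A : ℝ, |A| ≠ 1 →
      (Set.InjOn (crapperZ A) (Set.Ico (-Real.pi) Real.pi) ↔ A < A₀ ∨ A₀⁻¹ < A) := by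
  obtain ⟨A₀, hA₀, hcrit⟩ := exists_add_inv_eq two_lt_criticalValue
  refine ⟨A₀, hA₀, fun A hA ↦ ?_⟩
  rw [injOn_crapperZ_iff_mul_criticalValue_lt hA, ← hcrit, mul_add_inv_lt_one_add_sq_iff hA₀]

/-- There is a critical value `A₀ ∈ (0,1)` such that for every
`A ∈ [0,1)` the Crapper profile restricted to `[−π, π)` is injective iff `A < A₀`. -/
theorem crapper_critical_parameter :
    ∃ A₀ ∈ Set.Ioo (0 : ℝ) 1, ∀ A ∈ Set.Ico (0 : ℝ) 1,
      Set.InjOn (crapperZ A) (Set.Ico (-Real.pi) Real.pi) ↔ A < A₀ := by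
  obtain ⟨A₀, hA₀, h⟩ := crapper_critical_parameter_general
  refine ⟨A₀, hA₀, fun A hA ↦ (h A (by rw [abs_of_nonneg hA.1]; exact hA.2.ne)).trans
    (or_iff_left ?_)⟩
  exact (hA.2.trans ((one_lt_inv₀ hA₀.1).2 hA₀.2)).not_gt
end

section
/- (Hardy's inequality, compactness of the left Hardy operator.) Let 1 < p < ∞, 0 < R < ∞, and β, γ ∈ ℝ satisfy β + 1/p < 1 and γ > β − 1. Then there exists a continuous linear operator T from L^p of the measure x^{βp}dx on (0,R) to L^p of the measure x^{γp}dx on (0,R) such that for every f, (Tf)(x) = ∫₀^x f(t) dt for almost every x ∈ (0,R), and T is a compact operator. -/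
open MeasureTheory Set ENNReal

/-- The weighted measure `x^{βp} dx` on `(0,R)`. -/
noncomputable def hardyWeight (R β p : ℝ) : Measure ℝ :=
  (volume.restrict (Ioo (0 : ℝ) R)).withDensity
    (fun x => ENNReal.ofReal (x ^ (β * p)))

/-! The functionals `f ↦ ∫₀ˣ f` are represented by the kernels `t^{-βp} 1_{(0,x)}(t)`, which lie in
the dual weighted space `L^q` and depend continuously on `x`, with norm a multiple of
`x^{1 - 1/p - β}`. The condition on `γ` says exactly that this norm, as a function of `x`, lies in
the target space, so the Hardy operator is given by an `L^p` family of functionals (a Hille–Tamarkin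
operator). Approximating this family by simple functions approximates the operator in norm by
operators of finite rank. -/

open Filter Topology

section HilleTamarkin

variable {𝕜 α X E : Type*} [NontriviallyNormedField 𝕜] [MeasurableSpace α] {ν : Measure α}
  [NormedAddCommGroup X] [NormedSpace 𝕜 X] [NormedAddCommGroup E] [NormedSpace 𝕜 E]
  {r : ℝ≥0∞} [Fact (1 ≤ r)]

/-- The Hille–Tamarkin operator of an `L^r` family `ℓ` of continuous linear maps `X → E`: it sends
`f` to the function `x ↦ ℓ x f`. -/
noncomputable def hilleTamarkin : Lp (X →L[𝕜] E) r ν →L[𝕜] X →L[𝕜] Lp E r ν :=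
  (ContinuousLinearMap.compLpL₂ r ν (ContinuousLinearMap.apply 𝕜 E)).flip

theorem coeFn_hilleTamarkin (ℓ : Lp (X →L[𝕜] E) r ν) (f : X) :
    hilleTamarkin ℓ f =ᵐ[ν] fun x => ℓ x f :=
  ContinuousLinearMap.coeFn_compLp (ContinuousLinearMap.apply 𝕜 E f) ℓ

theorem hilleTamarkin_indicatorConstLp {s : Set α} (hs : MeasurableSet s) (hνs : ν s ≠ ∞)
    (c : X →L[𝕜] E) (f : X) :
    hilleTamarkin (indicatorConstLp r hs hνs c) f = indicatorConstLp r hs hνs (c f) := by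
  ext1
  filter_upwards [coeFn_hilleTamarkin (indicatorConstLp r hs hνs c) f,
    indicatorConstLp_coeFn (p := r) (hs := hs) (hμs := hνs) (c := c),
    indicatorConstLp_coeFn (p := r) (hs := hs) (hμs := hνs) (c := c f)] with x hT hc hcf
  rw [hT, hc, hcf]
  by_cases hx : x ∈ s <;> simp [hx]

theorem hilleTamarkin_indicatorConstLp_eq_comp {s : Set α} (hs : MeasurableSet s) (hνs : ν s ≠ ∞)
    (c : X →L[𝕜] E) :
    hilleTamarkin (indicatorConstLp r hs hνs c) =
      (hilleTamarkin (indicatorConstLp r hs hνs (.id 𝕜 E))).comp c := by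
  ext1 f
  simp only [ContinuousLinearMap.comp_apply, hilleTamarkin_indicatorConstLp,
    ContinuousLinearMap.id_apply]

theorem isCompactOperator_hilleTamarkin [ProperSpace E] (hr : r ≠ ∞) (ℓ : Lp (X →L[𝕜] E) r ν) :
    IsCompactOperator (hilleTamarkin ℓ) := by
  induction ℓ using Lp.induction hr with
  | indicatorConst c hs hνs =>
    rw [Lp.simpleFunc.coe_indicatorConst, hilleTamarkin_indicatorConstLp_eq_comp]
    exact (isCompactOperator_of_locallyCompactSpace_rng
      (hilleTamarkin (indicatorConstLp r hs hνs.ne (.id 𝕜 E)))).comp_clm c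
  | add hf hg _ ihf ihg =>
    rw [map_add]
    exact ihf.add ihg
  | isClosed =>
    exact isClosed_setOfPred_isCompactOperator.preimage hilleTamarkin.continuous

end HilleTamarkin

section Truncation

variable {α E : Type*} [MeasurableSpace α] {μ : Measure α} [NormedAddCommGroup E] {q : ℝ≥0∞}
  {g : α → E}

theorem tendsto_eLpNorm_indicator_zero {ι : Type*} {l : Filter ι} [l.IsCountablyGenerated]
    (hq : q ≠ ∞) (hg : MemLp g q μ) {s : ι → Set α} (hs : ∀ i, MeasurableSet (s i))
    (h_lim : ∀ᵐ t ∂μ, ∀ᶠ i in l, t ∉ s i) :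
    Tendsto (fun i => eLpNorm ((s i).indicator g) q μ) l (𝓝 0) := by
  rcases eq_or_ne q 0 with rfl | hq0
  · simp [tendsto_const_nhds]
  have hq_pos : 0 < q.toReal := ENNReal.toReal_pos hq0 hq
  have h_int : Tendsto (fun i => ∫⁻ t, ‖(s i).indicator g t‖ₑ ^ q.toReal ∂μ) l (𝓝 0) := by
    rw [← lintegral_zero (μ := μ)]
    refine tendsto_lintegral_filter_of_dominated_convergence' (fun t => ‖g t‖ₑ ^ q.toReal)
      (.of_forall fun i => (hg.1.indicator (hs i)).enorm.pow_const _)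
      (.of_forall fun i => .of_forall fun t => by gcongr; exact enorm_indicator_le_enorm_self g t)
      (lintegral_rpow_enorm_lt_top_of_eLpNorm_lt_top hq0 hq hg.2).ne ?_
    filter_upwards [h_lim] with t ht
    refine tendsto_const_nhds.congr' ?_
    filter_upwards [ht] with i hi
    simp [indicator_of_notMem hi, hq_pos]
  simp_rw [eLpNorm_eq_lintegral_rpow_enorm_toReal hq0 hq]
  simpa [hq_pos] using h_int.ennrpow_const (1 / q.toReal)

theorem continuous_toLp_indicator_Iio [LinearOrder α] [TopologicalSpace α] [OrderTopology α]
    [OpensMeasurableSpace α] [FirstCountableTopology α] [NullSingletonClass μ] [Fact (1 ≤ q)]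
    (hq : q ≠ ∞) (hg : MemLp g q μ) :
    Continuous fun x => (hg.indicator (measurableSet_Iio (a := x))).toLp := by
  rw [continuous_iff_continuousAt]
  intro x
  rw [ContinuousAt, tendsto_iff_edist_tendsto_0]
  simp_rw [Lp.edist_toLp_toLp, eLpNorm_indicator_sub_indicator]
  refine tendsto_eLpNorm_indicator_zero hq hg
    (fun y => measurableSet_Iio.symmDiff measurableSet_Iio) ?_
  filter_upwards [measure_eq_zero_iff_ae_notMem.1 (measure_singleton (μ := μ) x)] with t ht
  rcases lt_or_gt_of_ne ht with htx | hxt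
  · filter_upwards [lt_mem_nhds htx] with y hty
    simp [mem_symmDiff, htx, hty]
  · filter_upwards [gt_mem_nhds hxt] with y hyt
    simp [mem_symmDiff, hxt.le, hyt.le]

end Truncation

section Weight

variable {R β p r a x : ℝ}

instance : NullSingletonClass (hardyWeight R β p) := by
  rw [hardyWeight]; infer_instance

theorem ae_hardyWeight_iff {P : ℝ → Prop} :
    (∀ᵐ t ∂hardyWeight R β p, P t) ↔ ∀ᵐ t ∂volume.restrict (Ioo 0 R), P t := by
  rw [hardyWeight, ae_withDensity_iff (by fun_prop)]
  refine eventually_congr ?_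
  filter_upwards [ae_restrict_mem measurableSet_Ioo] with t ht
  simp [Real.rpow_pos_of_pos ht.1]

theorem hardyWeight_restrict_Iio (hx : x ≤ R) :
    (hardyWeight R β p).restrict (Iio x) = hardyWeight x β p := by
  rw [hardyWeight, restrict_withDensity measurableSet_Iio,
    Measure.restrict_restrict measurableSet_Iio, Iio_inter_Ioo, min_eq_left hx, hardyWeight]

theorem lintegral_enorm_rpow_hardyWeight (hr : 0 ≤ r) :
    ∫⁻ t, ‖t ^ a‖ₑ ^ r ∂hardyWeight R β p =
      ∫⁻ t in Ioo 0 R, ENNReal.ofReal (t ^ (β * p + a * r)) := by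
  rw [hardyWeight, lintegral_withDensity_eq_lintegral_mul _ (by fun_prop) (by fun_prop)]
  refine setLIntegral_congr_fun measurableSet_Ioo fun t ht => ?_
  have ht_pos : 0 < t := ht.1
  rw [Pi.mul_apply, Real.enorm_of_nonneg (by positivity),
    ENNReal.ofReal_rpow_of_nonneg (by positivity) hr, ← ENNReal.ofReal_mul (by positivity),
    ← Real.rpow_mul ht_pos.le, ← Real.rpow_add ht_pos]

theorem integrableOn_Ioo_zero_rpow (ha : -1 < a) : IntegrableOn (fun t => t ^ a) (Ioo 0 R) :=
  (intervalIntegral.intervalIntegrable_rpow' ha).1.mono_set Ioo_subset_Ioc_self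

theorem lintegral_Ioo_zero_rpow (ha : -1 < a) (hR : 0 ≤ R) :
    ∫⁻ t in Ioo 0 R, ENNReal.ofReal (t ^ a) = ENNReal.ofReal (R ^ (a + 1) / (a + 1)) := by
  rw [← ofReal_integral_eq_lintegral_ofReal (integrableOn_Ioo_zero_rpow ha),
    ← integral_Ioc_eq_integral_Ioo, ← intervalIntegral.integral_of_le hR,
    integral_rpow (.inl ha), Real.zero_rpow (by linarith), sub_zero]
  filter_upwards [ae_restrict_mem measurableSet_Ioo] with t ht
  exact Real.rpow_nonneg ht.1.le a

theorem eLpNorm_rpow_hardyWeight (hr : 0 < r) (ha : -1 < β * p + a * r) (hR : 0 ≤ R) :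
    eLpNorm (fun t => t ^ a) (ENNReal.ofReal r) (hardyWeight R β p) =
      ENNReal.ofReal ((R ^ (β * p + a * r + 1) / (β * p + a * r + 1)) ^ (1 / r)) := by
  have h_base : 0 ≤ R ^ (β * p + a * r + 1) / (β * p + a * r + 1) :=
    div_nonneg (Real.rpow_nonneg hR _) (by linarith)
  rw [eLpNorm_eq_lintegral_rpow_enorm_toReal (by simpa using hr) ofReal_ne_top,
    ENNReal.toReal_ofReal hr.le, lintegral_enorm_rpow_hardyWeight hr.le,
    lintegral_Ioo_zero_rpow ha hR, ENNReal.ofReal_rpow_of_nonneg h_base (by positivity)]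

theorem memLp_rpow_hardyWeight (hr : 0 < r) (ha : -1 < β * p + a * r) :
    MemLp (fun t => t ^ a) (ENNReal.ofReal r) (hardyWeight R β p) := by
  refine ⟨by fun_prop, ?_⟩
  rw [eLpNorm_lt_top_iff_lintegral_rpow_enorm_lt_top (by simpa using hr) ofReal_ne_top,
    ENNReal.toReal_ofReal hr.le, lintegral_enorm_rpow_hardyWeight hr.le]
  exact (integrableOn_Ioo_zero_rpow ha).lintegral_lt_top

theorem integral_rpow_neg_smul_hardyWeight {E : Type*} [NormedAddCommGroup E] [NormedSpace ℝ E]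
    (f : ℝ → E) :
    ∫ t, t ^ (-(β * p)) • f t ∂hardyWeight R β p = ∫ t in Ioo 0 R, f t := by
  rw [hardyWeight, integral_withDensity_eq_integral_toReal_smul (by fun_prop) (by simp)]
  refine setIntegral_congr_fun measurableSet_Ioo fun t ht => ?_
  have ht_pos : 0 < t := ht.1
  rw [ENNReal.toReal_ofReal (by positivity), smul_smul, ← Real.rpow_add ht_pos, add_neg_cancel,
    Real.rpow_zero, one_smul]

end Weight

section Functional

variable {R β p q x : ℝ}

theorem dual_weight_exponent (hpq : p.HolderConjugate q) :
    β * p + -(β * p) * q = -(β * q) := by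
  linear_combination (-β) * hpq.mul_eq_add

theorem memLp_rpow_neg_hardyWeight (hpq : p.HolderConjugate q) (hβ : β * q < 1) :
    MemLp (fun t => t ^ (-(β * p))) (ENNReal.ofReal q) (hardyWeight R β p) :=
  memLp_rpow_hardyWeight hpq.symm.pos (by rw [dual_weight_exponent hpq]; linarith)

/-- The element `t^{-βp} 1_{(0,x)}(t)` of `L^q(t^{βp} dt)` representing the functional
`f ↦ ∫₀ˣ f` on `L^p(t^{βp} dt)`. Truncating to `Iio x` suffices since the weight lives on
`(0,R)`. -/
noncomputable def hardyKernel (R : ℝ) (hpq : p.HolderConjugate q) (hβ : β * q < 1) (x : ℝ) :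
    Lp ℝ (ENNReal.ofReal q) (hardyWeight R β p) :=
  ((memLp_rpow_neg_hardyWeight hpq hβ).indicator (measurableSet_Iio (a := x))).toLp

theorem continuous_hardyKernel [Fact (1 ≤ ENNReal.ofReal q)] (hpq : p.HolderConjugate q)
    (hβ : β * q < 1) : Continuous (hardyKernel R hpq hβ) :=
  continuous_toLp_indicator_Iio ofReal_ne_top (memLp_rpow_neg_hardyWeight hpq hβ)

theorem coeFn_hardyKernel (hpq : p.HolderConjugate q) (hβ : β * q < 1) :
    hardyKernel R hpq hβ x =ᵐ[hardyWeight R β p] (Iio x).indicator fun t => t ^ (-(β * p)) :=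
  MemLp.coeFn_toLp _

theorem norm_hardyKernel (hpq : p.HolderConjugate q) (hβ : β * q < 1) (hx : x ∈ Icc 0 R) :
    ‖hardyKernel R hpq hβ x‖ = x ^ (1 / q - β) / (1 - β * q) ^ (1 / q) := by
  have hq_pos := hpq.symm.pos
  have hx_nonneg : 0 ≤ x := hx.1
  have hc_nonneg : 0 ≤ 1 - β * q := by linarith
  rw [hardyKernel, Lp.norm_toLp, eLpNorm_indicator_eq_eLpNorm_restrict measurableSet_Iio,
    hardyWeight_restrict_Iio hx.2, eLpNorm_rpow_hardyWeight hq_pos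
      (by rw [dual_weight_exponent hpq]; linarith) hx_nonneg,
    dual_weight_exponent hpq, neg_add_eq_sub, ENNReal.toReal_ofReal (by positivity),
    Real.div_rpow (by positivity) hc_nonneg, ← Real.rpow_mul hx_nonneg]
  congr 2
  field_simp

variable {E : Type*} [NormedAddCommGroup E] [NormedSpace ℝ E]

theorem integral_hardyKernel_smul (hpq : p.HolderConjugate q) (hβ : β * q < 1) (hx : x ≤ R)
    (f : ℝ → E) :
    ∫ t, hardyKernel R hpq hβ x t • f t ∂hardyWeight R β p = ∫ t in Ioo 0 x, f t := by
  have h_ae : (fun t => hardyKernel R hpq hβ x t • f t) =ᵐ[hardyWeight R β p]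
      (Iio x).indicator fun t => t ^ (-(β * p)) • f t := by
    filter_upwards [coeFn_hardyKernel (R := R) (x := x) hpq hβ] with t ht
    rw [ht, indicator_smul_apply_left]
  rw [integral_congr_ae h_ae, integral_indicator measurableSet_Iio, hardyWeight_restrict_Iio hx,
    integral_rpow_neg_smul_hardyWeight]

variable [CompleteSpace E] [Fact (1 ≤ ENNReal.ofReal p)]

theorem exists_continuous_hardyFunctional (hp : 1 < p) (hβ : β + 1 / p < 1) :
    ∃ ℓ : ℝ → Lp E (ENNReal.ofReal p) (hardyWeight R β p) →L[ℝ] E, Continuous ℓ ∧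
      (∃ C, ∀ x ∈ Ioo 0 R, ‖ℓ x‖ ≤ C * x ^ (1 - 1 / p - β)) ∧
      ∀ x ∈ Ioo 0 R, ∀ f, ℓ x f = ∫ t in Ioo 0 x, f t := by
  obtain ⟨q, hpq⟩ : ∃ q, p.HolderConjugate q := ⟨_, .conjExponent hp⟩
  have hq_inv : 1 / q = 1 - 1 / p := by simpa using hpq.one_sub_inv.symm
  have hβq : β * q < 1 := (lt_div_iff₀ hpq.symm.pos).1 (by linarith)
  have : Fact (1 ≤ ENNReal.ofReal q) := ⟨by simpa using hpq.symm.lt.le⟩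
  have := hpq.symm.ennrealOfReal
  let B := (ContinuousLinearMap.lsmul ℝ ℝ : ℝ →L[ℝ] E →L[ℝ] E).lpPairing (hardyWeight R β p)
    (ENNReal.ofReal q) (ENNReal.ofReal p)
  refine ⟨fun x => B (hardyKernel R hpq hβq x),
    B.continuous.comp (continuous_hardyKernel hpq hβq),
    ⟨‖B‖ / (1 - β * q) ^ (1 / q), fun x hx => ?_⟩, fun x hx f => ?_⟩
  · calc ‖B (hardyKernel R hpq hβq x)‖
      _ ≤ ‖B‖ * ‖hardyKernel R hpq hβq x‖ := B.le_opNorm _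
      _ = ‖B‖ / (1 - β * q) ^ (1 / q) * x ^ (1 - 1 / p - β) := by
        rw [norm_hardyKernel hpq hβq (Ioo_subset_Icc_self hx), ← hq_inv]
        ring
  · exact (ContinuousLinearMap.lpPairing_eq_integral _ _ f).trans
      (integral_hardyKernel_smul hpq hβq hx.2.le f)

end Functional

theorem hardy_left_compact_general {E : Type*} [NormedAddCommGroup E] [NormedSpace ℝ E]
    [FiniteDimensional ℝ E] {p r R β γ : ℝ} (hp : 1 < p) (hβ : β + 1 / p < 1)
    (hγ : β + 1 / p - 1 < γ + 1 / r)
    [Fact (1 ≤ ENNReal.ofReal p)] [Fact (1 ≤ ENNReal.ofReal r)] :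
    ∃ T : Lp E (ENNReal.ofReal p) (hardyWeight R β p) →L[ℝ]
        Lp E (ENNReal.ofReal r) (hardyWeight R γ r),
      IsCompactOperator T ∧
      ∀ f : Lp E (ENNReal.ofReal p) (hardyWeight R β p),
        ∀ᵐ x ∂(volume.restrict (Ioo (0 : ℝ) R)),
          (T f : ℝ → E) x = ∫ t in Ioo (0 : ℝ) x, (f : ℝ → E) t := by
  have := FiniteDimensional.proper_real E
  obtain ⟨ℓ, hℓ_cont, ⟨C, hℓ_bound⟩, hℓ⟩ :=
    exists_continuous_hardyFunctional (E := E) (R := R) hp hβ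
  have hr : 0 < r := zero_lt_one.trans_le (ENNReal.one_le_ofReal.1 Fact.out)
  have h_exp : -1 < γ * r + (1 - 1 / p - β) * r := by
    have : 0 < (γ + 1 / r - (β + 1 / p - 1)) * r := mul_pos (by linarith) hr
    linear_combination this + one_div_mul_cancel hr.ne'
  have hℓ_memLp : MemLp ℓ (ENNReal.ofReal r) (hardyWeight R γ r) := by
    refine (memLp_rpow_hardyWeight hr h_exp).of_le_mul (c := C) hℓ_cont.aestronglyMeasurable ?_
    rw [ae_hardyWeight_iff]
    filter_upwards [ae_restrict_mem measurableSet_Ioo] with x hx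
    rw [Real.norm_of_nonneg (Real.rpow_nonneg hx.1.le _)]
    exact hℓ_bound x hx
  refine ⟨hilleTamarkin hℓ_memLp.toLp, isCompactOperator_hilleTamarkin ofReal_ne_top _, fun f => ?_⟩
  filter_upwards [ae_hardyWeight_iff.1 (coeFn_hilleTamarkin hℓ_memLp.toLp f),
    ae_hardyWeight_iff.1 hℓ_memLp.coeFn_toLp, ae_restrict_mem measurableSet_Ioo] with x hTf hℓx hx
  rw [hTf, hℓx, hℓ x hx]

/-- Hardy's inequality, compactness of the left Hardy operator.
If `1 < p < ∞`, `0 < R < ∞`, `β + 1/p < 1` and `γ > β − 1`, then the Hardy operator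
`f ↦ (x ↦ ∫₀^x f)` extends to a compact continuous linear operator from
`L^p(x^{βp}dx)` to `L^p(x^{γp}dx)` on `(0,R)`. -/
theorem hardy_left_compact (p R β γ : ℝ) (hp : 1 < p) (hR : 0 < R)
    (hβ : β + 1 / p < 1) (hγ : β - 1 < γ)
    [Fact (1 ≤ ENNReal.ofReal p)] :
    ∃ T : Lp ℝ (ENNReal.ofReal p) (hardyWeight R β p) →L[ℝ]
        Lp ℝ (ENNReal.ofReal p) (hardyWeight R γ p),
      IsCompactOperator T ∧
      ∀ f : Lp ℝ (ENNReal.ofReal p) (hardyWeight R β p),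
        ∀ᵐ x ∂(volume.restrict (Ioo (0 : ℝ) R)),
          (T f : ℝ → ℝ) x = ∫ t in Ioo (0 : ℝ) x, (f : ℝ → ℝ) t :=
  hardy_left_compact_general hp hβ (by linarith)
end
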